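/- Let K be a finite extension of Q_p with ring of integers O_K, and let f: O_K^n → C be a Schwartz-Bruhat... [replaced by real statement]: Let f: R^n → R be a Schwartz function with f(0) = 0, and let L ⊂ R^n be a full-rank lattice. Then the function s ↦ ∫₀^∞ Σ_{λ ∈ L} f(tλ) t^s dt/t, which converges absolutely for Re(s) sufficiently large, admits a meromorphic continuation to all of C that is holomorphic at s = 0, with at most a simple pole at s = n with residue equal to the value at 0 of the Fourier transform of f divided by the covolume of L. -/

import Mathlib

open MeasureTheory Filter
open scoped BigOperators

open scoped FourierTransform SchwartzMap Topology

/-- The vector of `EuclideanSpace ℝ ι` with the given integer coordinates. -/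
noncomputable def intVec {ι : Type*} (k : ι → ℤ) : EuclideanSpace ℝ ι :=
  WithLp.toLp 2 fun i => (k i : ℝ)

@[simp]
lemma intVec_apply {ι : Type*} (k : ι → ℤ) (i : ι) : intVec k i = k i := rfl

lemma intVec_injective {ι : Type*} :
    Function.Injective (intVec : (ι → ℤ) → EuclideanSpace ℝ ι) := by
  intro k l h
  ext i
  have := congrArg (fun v : EuclideanSpace ℝ ι => v i) h
  simpa using this

@[simp]
lemma intVec_zero {ι : Type*} : intVec (0 : ι → ℤ) = 0 := by
  ext i; simp

lemma one_le_norm_intVec {ι : Type*} [Fintype ι] {k : ι → ℤ} (hk : k ≠ 0) : 1 ≤ ‖intVec k‖ := by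
  obtain ⟨i, hi⟩ := Function.ne_iff.mp hk
  refine le_trans ?_ (PiLp.norm_apply_le (intVec k) i)
  rw [intVec_apply, Int.norm_cast_real, Int.norm_eq_abs]
  exact_mod_cast Int.one_le_abs hi

lemma summable_one_add_norm_intVec {ι : Type*} [Fintype ι] {N : ℕ} (hN : Fintype.card ι < N) :
    Summable fun k : ι → ℤ => ((1 + ‖intVec k‖) ^ N)⁻¹ := by
  classical
  let b := (EuclideanSpace.basisFun ι ℝ).toBasis
  let L : Submodule ℤ (EuclideanSpace ℝ ι) := Submodule.span ℤ (Set.range b)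
  have hmem (k : ι → ℤ) : intVec k ∈ L := by
    have : intVec k = ∑ i, k i • b i := by
      ext j
      simp [b, Pi.single_apply]
    rw [this]
    exact Submodule.sum_mem _ fun i _ => Submodule.smul_mem _ _ (Submodule.subset_span ⟨i, rfl⟩)
  have hrank : Module.finrank ℤ L < N := by
    rw [ZLattice.rank ℝ L, finrank_euclideanSpace]
    exact hN
  have hs := (ZLattice.summable_norm_pow_inv L N hrank).comp_injective
    (i := fun k : ι → ℤ => (⟨intVec k, hmem k⟩ : L))
    (fun k l h => intVec_injective (congrArg Subtype.val h))
  refine Summable.of_norm_bounded_eventually hs ?_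
  filter_upwards [(Set.finite_singleton (0 : ι → ℤ)).compl_mem_cofinite] with k hk
  have h1 := one_le_norm_intVec (k := k) hk
  rw [Real.norm_of_nonneg (by positivity)]
  simp only [Function.comp, inv_pow]
  gcongr
  exact le_add_of_nonneg_left zero_le_one

lemma SchwartzMap.exists_norm_le_inv_one_add_norm_pow {E F : Type*} [NormedAddCommGroup E]
    [NormedSpace ℝ E] [NormedAddCommGroup F] [NormedSpace ℝ F] (h : 𝓢(E, F)) (N : ℕ) :
    ∃ C, 0 ≤ C ∧ ∀ x, ‖h x‖ ≤ C * ((1 + ‖x‖) ^ N)⁻¹ := by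
  refine ⟨2 ^ N * (Finset.Iic (N, 0)).sup (fun m => SchwartzMap.seminorm ℝ m.1 m.2) h,
    by positivity, fun x => ?_⟩
  have := SchwartzMap.one_add_le_sup_seminorm_apply (𝕜 := ℝ) (m := (N, 0)) le_rfl le_rfl h x
  rw [norm_iteratedFDeriv_zero] at this
  rw [← div_eq_mul_inv, le_div_iff₀ (by positivity), mul_comm]
  exact this

lemma SchwartzMap.exists_summable_bound_translate {ι F : Type*} [Fintype ι] [NormedAddCommGroup F]
    [NormedSpace ℝ F] (h : 𝓢(EuclideanSpace ℝ ι, F)) (R : ℝ) :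
    ∃ u : (ι → ℤ) → ℝ, Summable u ∧ ∀ k x, ‖x‖ ≤ R → ‖h (x + intVec k)‖ ≤ u k := by
  obtain ⟨C, hC, hb⟩ := h.exists_norm_le_inv_one_add_norm_pow (Fintype.card ι + 1)
  refine ⟨_, (summable_one_add_norm_intVec (ι := ι) (Nat.lt_succ_self _)).mul_left
    (C * (1 + R) ^ (Fintype.card ι + 1)), fun k x hx => (hb _).trans ?_⟩
  have hR : 0 ≤ R := (norm_nonneg x).trans hx
  rw [mul_assoc]
  gcongr
  rw [← div_eq_mul_inv, le_div_iff₀ (by positivity), inv_mul_le_iff₀ (by positivity), ← mul_pow]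
  gcongr
  have : ‖intVec k‖ ≤ ‖x + intVec k‖ + ‖x‖ := by
    simpa using norm_sub_le (x + intVec k) x
  nlinarith [norm_nonneg (x + intVec k)]

lemma SchwartzMap.exists_summable_bound_smul {ι F : Type*} [Fintype ι] [NormedAddCommGroup F]
    [NormedSpace ℝ F] (h : 𝓢(EuclideanSpace ℝ ι, F)) {a : ℝ} (ha : 0 < a) :
    ∃ u : (ι → ℤ) → ℝ, Summable u ∧ ∀ k t, a ≤ t → ‖h (t • intVec k)‖ ≤ u k := by
  obtain ⟨C, hC, hb⟩ := h.exists_norm_le_inv_one_add_norm_pow (Fintype.card ι + 1)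
  refine ⟨_, (summable_one_add_norm_intVec (ι := ι) (Nat.lt_succ_self _)).mul_left
    (C * ((min a 1) ^ (Fintype.card ι + 1))⁻¹), fun k t ht => (hb _).trans ?_⟩
  have hm : 0 < min a 1 := lt_min ha one_pos
  rw [mul_assoc, ← mul_inv, ← mul_pow]
  gcongr
  rw [norm_smul, Real.norm_of_nonneg (ha.le.trans ht), mul_add]
  gcongr
  · simp
  · exact (min_le_left _ _).trans ht

lemma SchwartzMap.continuousOn_tsum_smul_intVec {ι F : Type*} [Fintype ι] [NormedAddCommGroup F]
    [NormedSpace ℝ F] [CompleteSpace F] (h : 𝓢(EuclideanSpace ℝ ι, F)) :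
    ContinuousOn (fun t : ℝ => ∑' k : ι → ℤ, h (t • intVec k)) (Set.Ioi 0) := by
  intro t (ht : 0 < t)
  obtain ⟨u, hu, hb⟩ := h.exists_summable_bound_smul (half_pos ht)
  have : ContinuousOn (fun t : ℝ => ∑' k : ι → ℤ, h (t • intVec k)) (Set.Ici (t / 2)) :=
    continuousOn_tsum (fun k => (h.continuous.comp (by fun_prop)).continuousOn) hu
      fun k s hs => hb k s hs
  exact (this.continuousAt (Ici_mem_nhds (half_lt_self ht))).continuousWithinAt

lemma SchwartzMap.tsum_smul_intVec_sub_isBigO {ι F : Type*} [Fintype ι] [NormedAddCommGroup F]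
    [NormedSpace ℝ F] [CompleteSpace F] (h : 𝓢(EuclideanSpace ℝ ι, F)) (r : ℝ) :
    (fun t : ℝ => (∑' k : ι → ℤ, h (t • intVec k)) - h 0) =O[atTop] fun t => t ^ r := by
  classical
  obtain ⟨N, hNr⟩ := exists_nat_ge (-r)
  set M := N + Fintype.card ι + 1 with hM
  obtain ⟨C, hC, hb⟩ := h.exists_norm_le_inv_one_add_norm_pow M
  have hs : Summable fun k : ι → ℤ => ((1 + ‖intVec k‖) ^ M)⁻¹ :=
    summable_one_add_norm_intVec (by omega)
  refine Asymptotics.IsBigO.of_bound (C * 2 ^ M * ∑' k : ι → ℤ, ((1 + ‖intVec k‖) ^ M)⁻¹) ?_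
  filter_upwards [eventually_ge_atTop 1] with t ht
  have ht0 : 0 < t := by linarith
  have hsum : Summable fun k : ι → ℤ => h (t • intVec k) := by
    obtain ⟨u, hu, hb'⟩ := h.exists_summable_bound_smul ht0
    exact hu.of_norm_bounded fun k => hb' k t le_rfl
  rw [hsum.tsum_eq_add_tsum_ite 0, intVec_zero, smul_zero, add_sub_cancel_left]
  have hterm (k : ι → ℤ) : ‖if k = 0 then 0 else h (t • intVec k)‖ ≤
      C * 2 ^ M * (t ^ M)⁻¹ * ((1 + ‖intVec k‖) ^ M)⁻¹ := by
    split_ifs with hk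
    · simp only [norm_zero]; positivity
    · refine (hb _).trans ?_
      have h1 := one_le_norm_intVec hk
      rw [mul_assoc, mul_assoc]
      gcongr
      rw [← mul_inv, ← mul_pow, ← div_eq_mul_inv, le_div_iff₀ (by positivity),
        inv_mul_le_iff₀ (by positivity), ← mul_pow]
      refine pow_le_pow_left₀ (by positivity) ?_ M
      rw [norm_smul, Real.norm_of_nonneg ht0.le]
      nlinarith
  refine (tsum_of_norm_bounded (hs.mul_left _).hasSum hterm).trans ?_
  rw [tsum_mul_left, Real.norm_of_nonneg (by positivity), mul_right_comm _ _ (∑' _, _)]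
  have : (t ^ M)⁻¹ ≤ t ^ r := by
    rw [← Real.rpow_natCast, ← Real.rpow_neg ht0.le]
    refine Real.rpow_le_rpow_of_exponent_le ht ?_
    rw [hM]; push_cast
    have : (0 : ℝ) ≤ Fintype.card ι := by positivity
    linarith
  gcongr

lemma MeasureTheory.Integrable.hasSum_setIntegral_comp_add_intCast {ι E : Type*} [Fintype ι]
    [NormedAddCommGroup E] [NormedSpace ℝ E] {φ : (ι → ℝ) → E} (hφ : Integrable φ) :
    HasSum (fun k : ι → ℤ =>
      ∫ x in {x : ι → ℝ | ∀ i, x i ∈ Set.Ioc ((0 : ι → ℝ) i) ((0 : ι → ℝ) i + 1)},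
        φ (x + fun i => (k i : ℝ))) (∫ x, φ x) := by
  let B (k : ι → ℤ) : Set (ι → ℝ) := {x | ∀ i, x i ∈ Set.Ioc (k i : ℝ) (k i + 1)}
  have hmeas (k : ι → ℤ) : MeasurableSet (B k) := MeasurableSet.univ_pi' fun i => measurableSet_Ioc
  have hceil {k : ι → ℤ} {x : ι → ℝ} : x ∈ B k ↔ ∀ i, ⌈x i⌉ = k i + 1 := by
    refine forall_congr' fun i => ?_
    rw [Int.ceil_eq_iff]
    simp
  have hdisj : Pairwise (Function.onFun Disjoint B) := by
    intro k l hkl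
    refine Set.disjoint_left.mpr fun x hk hl => hkl ?_
    ext i
    have h1 := hceil.mp hk i
    have h2 := hceil.mp hl i
    omega
  have hunion : ⋃ k, B k = Set.univ := by
    refine Set.eq_univ_of_forall fun x => Set.mem_iUnion.mpr ⟨fun i => ⌈x i⌉ - 1, ?_⟩
    exact hceil.mpr fun i => by ring
  have hsum := hasSum_integral_iUnion hmeas hdisj (f := φ) (μ := volume) hφ.integrableOn
  rw [hunion, setIntegral_univ] at hsum
  convert! hsum using 2 with k
  have hpre : {x : ι → ℝ | ∀ i, x i ∈ Set.Ioc ((0 : ι → ℝ) i) ((0 : ι → ℝ) i + 1)} =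
      (fun x => x + fun i => (k i : ℝ)) ⁻¹' B k := by
    ext x
    refine forall_congr' fun i => ?_
    simp [add_comm (x i)]
  rw [hpre]
  exact (measurePreserving_add_right volume fun i => (k i : ℝ)).setIntegral_preimage_emb
    (measurableEmbedding_addRight _) φ (B k)

lemma UnitAddTorus.mFourier_coe_apply {ι : Type*} [Fintype ι] (m : ι → ℤ) (x : ι → ℝ) :
    UnitAddTorus.mFourier m (fun i => (x i : UnitAddCircle)) =
      Complex.exp (2 * Real.pi * Complex.I * ∑ i, (m i : ℂ) * x i) := by
  simp only [UnitAddTorus.mFourier, ContinuousMap.coe_mk, fourier_coe_apply, ← Complex.exp_sum,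
    Finset.mul_sum]
  refine congrArg _ (Finset.sum_congr rfl fun i _ => ?_)
  push_cast
  ring

lemma UnitAddTorus.isQuotientMap_coe (ι : Type*) :
    Topology.IsQuotientMap fun (x : ι → ℝ) i => (x i : UnitAddCircle) :=
  (IsOpenQuotientMap.piMap fun _ : ι =>
    (QuotientAddGroup.isOpenQuotientMap_mk :
      IsOpenQuotientMap ((↑) : ℝ → UnitAddCircle))).isQuotientMap

lemma Real.fourier_intVec {ι : Type*} [Fintype ι] (h : EuclideanSpace ℝ ι → ℂ) (m : ι → ℤ) :
    𝓕 h (intVec m) = ∫ x : ι → ℝ,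
      UnitAddTorus.mFourier (-m) (fun i => (x i : UnitAddCircle)) * h (WithLp.toLp 2 x) := by
  rw [Real.fourier_eq', ← (PiLp.volume_preserving_toLp ι).integral_comp
    (MeasurableEquiv.toLp 2 (ι → ℝ)).measurableEmbedding]
  congr 1 with x
  rw [UnitAddTorus.mFourier_coe_apply, smul_eq_mul]
  congr 2
  simp only [PiLp.inner_apply, intVec_apply, RCLike.inner_apply, conj_trivial, Pi.neg_apply]
  push_cast
  simp only [Finset.mul_sum, Finset.sum_mul]
  refine Finset.sum_congr rfl fun i _ => ?_
  ring

/-- **Poisson summation** for Schwartz functions and the lattice `ℤ^ι`. -/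
theorem SchwartzMap.tsum_intVec_eq_tsum_fourier {ι : Type*} [Fintype ι]
    (h : 𝓢(EuclideanSpace ℝ ι, ℂ)) :
    ∑' k : ι → ℤ, h (intVec k) = ∑' k : ι → ℤ, 𝓕 h (intVec k) := by
  have hsummable (x : EuclideanSpace ℝ ι) : Summable fun k : ι → ℤ => h (x + intVec k) := by
    obtain ⟨u, hu, hb⟩ := h.exists_summable_bound_translate ‖x‖
    exact hu.of_norm_bounded fun k => hb k x le_rfl
  have hcont : Continuous fun x : EuclideanSpace ℝ ι => ∑' k : ι → ℤ, h (x + intVec k) := by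
    refine continuous_iff_continuousAt.mpr fun x => ?_
    obtain ⟨u, hu, hb⟩ := h.exists_summable_bound_translate (‖x‖ + 1)
    have : ContinuousOn (fun x : EuclideanSpace ℝ ι => ∑' k : ι → ℤ, h (x + intVec k))
        (Metric.closedBall 0 (‖x‖ + 1)) :=
      continuousOn_tsum (fun k => (h.continuous.comp (by fun_prop)).continuousOn) hu
        fun k y hy => hb k y (by simpa using hy)
    refine this.continuousAt (Metric.closedBall_mem_nhds_of_mem ?_)
    simp
  let G : C(ι → ℝ, ℂ) := ⟨fun x => ∑' k : ι → ℤ, h (WithLp.toLp 2 x + intVec k),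
    hcont.comp (PiLp.continuous_toLp 2 _)⟩
  let q : C(ι → ℝ, UnitAddTorus ι) :=
    ⟨fun x i => (x i : UnitAddCircle), (UnitAddTorus.isQuotientMap_coe ι).continuous⟩
  have hq : Topology.IsQuotientMap q := UnitAddTorus.isQuotientMap_coe ι
  have hfac : Function.FactorsThrough G q := by
    intro x y hxy
    have hex (i : ι) : ∃ l : ℤ, (l : ℝ) = x i - y i := by
      have h1 : ((x i : ℝ) : UnitAddCircle) = (y i : ℝ) := congrFun hxy i
      rw [← sub_eq_zero, ← AddCircle.coe_sub, AddCircle.coe_eq_zero_iff] at h1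
      obtain ⟨l, hl⟩ := h1
      exact ⟨l, by simpa using hl⟩
    choose l hl using hex
    change ∑' k : ι → ℤ, h (WithLp.toLp 2 x + intVec k) =
      ∑' k : ι → ℤ, h (WithLp.toLp 2 y + intVec k)
    rw [← (Equiv.addLeft l).tsum_eq fun k => h (WithLp.toLp 2 y + intVec k)]
    refine tsum_congr fun k => congrArg h ?_
    ext i
    simp only [PiLp.add_apply, intVec_apply, Equiv.coe_addLeft, Pi.add_apply, Int.cast_add, hl]
    ring
  let F : C(UnitAddTorus ι, ℂ) := hq.lift G hfac
  have hF (x : ι → ℝ) : F (fun i => (x i : UnitAddCircle)) =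
      ∑' k : ι → ℤ, h (WithLp.toLp 2 x + intVec k) :=
    DFunLike.congr_fun (hq.lift_comp G hfac) x
  have hcoeff (m : ι → ℤ) : UnitAddTorus.mFourierCoeff F m = 𝓕 h (intVec m) := by
    let e : C(ι → ℝ, ℂ) := (UnitAddTorus.mFourier (-m)).comp q
    have he (x : ι → ℝ) (k : ι → ℤ) : e (x + fun i => (k i : ℝ)) = e x := by
      refine congrArg (UnitAddTorus.mFourier (-m)) (funext fun i => ?_)
      have : ((k i : ℝ) : UnitAddCircle) = 0 := (AddCircle.coe_eq_zero_iff 1).mpr ⟨k i, by simp⟩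
      change ((x i + k i : ℝ) : UnitAddCircle) = (x i : ℝ)
      rw [AddCircle.coe_add, this, add_zero]
    have hnorm (x : ι → ℝ) : ‖e x‖ ≤ 1 :=
      (ContinuousMap.norm_coe_le_norm (UnitAddTorus.mFourier (-m)) (q x)).trans_eq
        UnitAddTorus.mFourier_norm
    let φ (x : ι → ℝ) : ℂ := e x * h (WithLp.toLp 2 x)
    have hφ : Integrable φ := by
      have hi : Integrable fun x : ι → ℝ => h (WithLp.toLp 2 x) :=
        (PiLp.volume_preserving_toLp ι).integrable_comp_of_integrable h.integrable
      exact hi.bdd_mul (c := 1) e.continuous.aestronglyMeasurable (ae_of_all _ hnorm)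
    have hφadd (x : ι → ℝ) (k : ι → ℤ) :
        φ (x + fun i => (k i : ℝ)) = e x * h (WithLp.toLp 2 x + intVec k) := by
      simp only [φ, he]
      rfl
    rw [UnitAddTorus.mFourierCoeff_eq_integral F m 0, SchwartzMap.fourier_coe, Real.fourier_intVec]
    refine Eq.trans ?_ hφ.hasSum_setIntegral_comp_add_intCast.tsum_eq
    rw [(hasSum_integral_of_summable_integral_norm (fun k => ?_)
      hφ.norm.hasSum_setIntegral_comp_add_intCast.summable).tsum_eq]
    · refine integral_congr_ae (ae_of_all _ fun x => ?_)
      simp only [hφadd, smul_eq_mul, hF, tsum_mul_left]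
      rfl
    · exact (hφ.comp_add_right _).integrableOn
  have hs : Summable (UnitAddTorus.mFourierCoeff F) := by
    simp only [funext hcoeff]
    obtain ⟨u, hu, hb⟩ := (𝓕 h).exists_summable_bound_translate 0
    exact hu.of_norm_bounded fun k => by simpa using hb k 0 (by simp)
  have hmain := (UnitAddTorus.hasSum_mFourier_series_apply_of_summable hs
    (fun i => ((0 : ι → ℝ) i : UnitAddCircle))).tsum_eq
  rw [hF] at hmain
  simpa [hcoeff, UnitAddTorus.mFourier] using hmain.symm

/-- Poisson summation for a dilated Schwartz function. -/
theorem SchwartzMap.tsum_inv_smul_intVec_eq {ι : Type*} [Fintype ι]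
    (h : 𝓢(EuclideanSpace ℝ ι, ℂ)) {t : ℝ} (ht : 0 < t) :
    ∑' k : ι → ℤ, h (t⁻¹ • intVec k) =
      (t : ℂ) ^ Fintype.card ι * ∑' k : ι → ℤ, 𝓕 h (t • intVec k) := by
  let e : EuclideanSpace ℝ ι ≃L[ℝ] EuclideanSpace ℝ ι :=
    ContinuousLinearEquiv.smulLeft (Units.mk0 t ht.ne')⁻¹
  let dil : 𝓢(EuclideanSpace ℝ ι, ℂ) := SchwartzMap.compCLMOfContinuousLinearEquiv ℂ e h
  have happly (x : EuclideanSpace ℝ ι) : dil x = h (t⁻¹ • x) := rfl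
  have hfourier (w : EuclideanSpace ℝ ι) :
      𝓕 dil w = (t : ℂ) ^ Fintype.card ι * 𝓕 h (t • w) := by
    rw [SchwartzMap.fourier_coe, SchwartzMap.fourier_coe, Real.fourier_eq', Real.fourier_eq']
    have := Measure.integral_comp_inv_smul_of_nonneg volume
      (fun v => Complex.exp (↑(-2 * Real.pi * inner ℝ v (t • w)) * Complex.I) • h v) ht.le
    rw [finrank_euclideanSpace, Complex.real_smul, Complex.ofReal_pow] at this
    rw [← this]
    refine integral_congr_ae (ae_of_all _ fun v => ?_)
    simp only [happly, inner_smul_left, inner_smul_right, conj_trivial]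
    rw [mul_inv_cancel_left₀ ht.ne']
  rw [← tsum_mul_left]
  simpa only [happly, hfourier] using dil.tsum_intVec_eq_tsum_fourier

/-- The functional equation pair attached to the theta series `∑ k, h (t • k)` over `ℤ^ι`. -/
noncomputable def SchwartzMap.weakFEPair {ι : Type*} [Fintype ι] [Nonempty ι]
    (h : 𝓢(EuclideanSpace ℝ ι, ℂ)) : WeakFEPair ℂ where
  f t := ∑' k : ι → ℤ, h (t • intVec k)
  g t := ∑' k : ι → ℤ, 𝓕 h (t • intVec k)
  k := Fintype.card ι
  ε := 1
  f₀ := h 0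
  g₀ := 𝓕 h 0
  hf_int := h.continuousOn_tsum_smul_intVec.locallyIntegrableOn measurableSet_Ioi
  hg_int := (𝓕 h).continuousOn_tsum_smul_intVec.locallyIntegrableOn measurableSet_Ioi
  hk := by exact_mod_cast Fintype.card_pos
  hε := one_ne_zero
  h_feq x hx := by
    rw [one_div, h.tsum_inv_smul_intVec_eq hx, one_mul, Real.rpow_natCast, Complex.ofReal_pow,
      smul_eq_mul]
  hf_top := h.tsum_smul_intVec_sub_isBigO
  hg_top := (𝓕 h).tsum_smul_intVec_sub_isBigO

/-- Coordinates on a Euclidean space adapted to a full-rank lattice: they identify the lattice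
with `ℤ^ι`, and scale Lebesgue measure by the inverse of the covolume. -/
lemma ZLattice.exists_equiv_intVec {n : ℕ} (L : Submodule ℤ (EuclideanSpace ℝ (Fin n)))
    [DiscreteTopology L] [IsZLattice ℝ L] :
    ∃ (A : EuclideanSpace ℝ (Fin n) ≃L[ℝ] EuclideanSpace ℝ (Fin n)) (e : (Fin n → ℤ) ≃ L),
      (∀ k, (e k : EuclideanSpace ℝ (Fin n)) = A (intVec k)) ∧
      ∀ f : EuclideanSpace ℝ (Fin n) → ℝ,
        ∫ x, f (A x) = (∫ x, f x) / ZLattice.covolume L volume := by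
  have : Module.Finite ℤ L := ZLattice.module_finite ℝ L
  have : Module.Free ℤ L := ZLattice.module_free ℝ L
  let b : Module.Basis (Fin n) ℤ L := Module.finBasisOfFinrankEq ℤ L (by
    rw [ZLattice.rank ℝ L, finrank_euclideanSpace, Fintype.card_fin])
  let c := (b.ofZLatticeBasis ℝ L).equivFun.toContinuousLinearEquiv
  let A : EuclideanSpace ℝ (Fin n) ≃L[ℝ] EuclideanSpace ℝ (Fin n) :=
    (EuclideanSpace.equiv (Fin n) ℝ).trans c.symm
  refine ⟨A, b.equivFun.symm.toEquiv, fun k => ?_, fun f => ?_⟩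
  · change ((b.equivFun.symm k : L) : EuclideanSpace ℝ (Fin n)) =
      (b.ofZLatticeBasis ℝ L).equivFun.symm fun i => (k i : ℝ)
    simp [Module.Basis.equivFun_symm_apply, Int.cast_smul_eq_zsmul]
  · have hcov := ZLattice.covolume_pos L volume
    have hmap : Measure.map c.symm volume =
        ENNReal.ofReal (ZLattice.covolume L volume)⁻¹ •
          (volume : Measure (EuclideanSpace ℝ (Fin n))) := by
      ext s hs
      rw [Measure.map_apply c.symm.continuous.measurable hs, Measure.smul_apply, smul_eq_mul,
        ENNReal.ofReal_inv_of_pos hcov, mul_comm, ← div_eq_mul_inv,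
        ← ZLattice.volume_image_eq_volume_div_covolume' L b hs.nullMeasurableSet]
      exact congrArg volume (c.toEquiv.image_eq_preimage_symm s).symm
    have h1 : ∫ x, f (A x) = ∫ y, f (c.symm y) :=
      (PiLp.volume_preserving_ofLp (Fin n)).integral_comp
        (MeasurableEquiv.toLp 2 (Fin n → ℝ)).symm.measurableEmbedding fun y => f (c.symm y)
    have h2 : ∫ y, f y ∂(Measure.map c.symm volume) = ∫ y, f (c.symm y) :=
      c.symm.toHomeomorph.measurableEmbedding.integral_map f
    rw [h1, ← h2, hmap, integral_smul_measure, ENNReal.toReal_ofReal (by positivity), smul_eq_mul,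
      div_eq_inv_mul]

/-- Let `f : ℝ^n → ℝ` be a Schwartz function with `f 0 = 0` and let
`L ⊂ ℝ^n` be a full-rank lattice.  The function
`s ↦ ∫₀^∞ (Σ_{λ ∈ L} f(tλ)) t^s dt/t`, which converges absolutely for `Re s` large,
admits a meromorphic continuation `F` to all of `ℂ`: `F` is analytic away from `s = n`
(in particular holomorphic at `s = 0`), and at `s = n` it has at most a simple pole with
residue `f̂(0)/covol(L) = (∫ f)/covol(L)`. -/
theorem stmt_2
    (n : ℕ) (hn : 0 < n)
    (f : SchwartzMap (EuclideanSpace ℝ (Fin n)) ℝ) (hf0 : f 0 = 0)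
    (L : Submodule ℤ (EuclideanSpace ℝ (Fin n))) [DiscreteTopology L] [IsZLattice ℝ L] :
    ∃ (F : ℂ → ℂ) (A : ℝ),
      -- F agrees with the absolutely convergent Mellin integral for Re s > A
      (∀ s : ℂ, A < s.re →
        IntegrableOn
          (fun t : ℝ => ((∑' l : L, f (t • (l : EuclideanSpace ℝ (Fin n))) : ℝ) : ℂ)
            * (t : ℂ) ^ (s - 1)) (Set.Ioi 0) ∧
        F s = ∫ t in Set.Ioi (0:ℝ),
          ((∑' l : L, f (t • (l : EuclideanSpace ℝ (Fin n))) : ℝ) : ℂ) * (t : ℂ) ^ (s - 1)) ∧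
      -- meromorphic continuation: analytic away from s = n, in particular at s = 0
      AnalyticOnNhd ℂ F {(n : ℂ)}ᶜ ∧
      AnalyticAt ℂ F 0 ∧
      -- at most a simple pole at s = n with residue (∫ f)/covol(L)
      Tendsto (fun s : ℂ => (s - (n : ℂ)) * F s) (nhdsWithin (n : ℂ) {(n : ℂ)}ᶜ)
        (nhds (((∫ x, f x) / ZLattice.covolume L volume : ℝ) : ℂ)) := by
  have : Nonempty (Fin n) := ⟨⟨0, hn⟩⟩
  obtain ⟨A, e, heA, hint⟩ := ZLattice.exists_equiv_intVec L
  let h : 𝓢(EuclideanSpace ℝ (Fin n), ℂ) :=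
    (SchwartzMap.compCLMOfContinuousLinearEquiv ℝ A f).postcompCLM Complex.ofRealCLM
  have happly (x : EuclideanSpace ℝ (Fin n)) : h x = (f (A x) : ℂ) := rfl
  let P := h.weakFEPair
  have hPk : P.k = n := by simp [P, SchwartzMap.weakFEPair]
  have hf₀ : P.f₀ = 0 := by
    change h 0 = 0
    rw [happly, map_zero, hf0, Complex.ofReal_zero]
  have hPf (t : ℝ) : P.f t = ((∑' l : L, f (t • (l : EuclideanSpace ℝ (Fin n))) : ℝ) : ℂ) := by
    change ∑' k : Fin n → ℤ, h (t • intVec k) = _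
    rw [← e.tsum_eq, Complex.ofReal_tsum]
    simp only [happly, map_smul, heA]
  have hg₀ : P.g₀ = (((∫ x, f x) / ZLattice.covolume L volume : ℝ) : ℂ) := by
    change 𝓕 h 0 = _
    rw [SchwartzMap.fourier_coe, Real.fourier_eq', ← hint, ← integral_complex_ofReal]
    simp [happly]
  have hdiff (s : ℂ) (hs : s ≠ n) : DifferentiableAt ℂ P.Λ s :=
    P.differentiableAt_Λ (Or.inr hf₀) (Or.inl (by simpa [hPk] using hs))
  have hanalytic : AnalyticOnNhd ℂ P.Λ {(n : ℂ)}ᶜ :=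
    DifferentiableOn.analyticOnNhd (fun s hs => (hdiff s hs).differentiableWithinAt)
      isOpen_compl_singleton
  refine ⟨P.Λ, n, fun s hs => ?_, hanalytic, hanalytic 0 ?_, ?_⟩
  · obtain ⟨hconv, hval⟩ := P.hasMellin (s := s) (by rwa [hPk])
    simp only [hf₀, sub_zero, MellinConvergent, mellin, hPf, smul_eq_mul] at hconv hval
    simp only [mul_comm _ ((_ : ℂ) ^ (s - 1))]
    exact ⟨hconv, hval.symm⟩
  · exact fun h0 => hn.ne (by exact_mod_cast Set.mem_singleton_iff.mp h0)
  · have hres := P.Λ_residue_k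
    rw [hPk, hg₀, show P.ε = 1 from rfl, one_smul, Complex.ofReal_natCast] at hres
    exact hres
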